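/- Let (λ1, λ2, λ3) be a viable triple of partitions of n, each having at least two corners, which is not base case, and let A ∈ SYT(λ1), B ∈ SYT(λ2), C ∈ SYT(λ3). If the triple of tableaux (A, B, C) is viable, then there exists g ∈ C_n (acting diagonally) such that the triple (g(A)∖n, g(B)∖n, g(C)∖n) of tableaux on n−1 boxes is also viable. -/

import Mathlib

/-!
The three shapes cause no trouble. Removing a box turns a non-hook into a hook only if the non-hook
is almost hook-shaped (`hook_of_restrict`), and since the triple of shapes is not base case, the
restricted shapes form a viable triple whatever group element is used
(`ViableTripleShape.of_restrict`). Moreover one of the first two shapes is neither a hook nor an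
almost hook; as it has two corners, `n ≥ 7` (`seven_le_card`).

It remains to find a group element after which the restrictions are pairwise neither equal nor
transposes of each other. A tableau is encoded by the sequence `f` whose term `f k` is the cell
containing `k`. Then `t_k` exchanges `f k` and `f (k + 1)` unless these cells are adjacent, and
deleting the largest entry truncates the sequence. The action commutes with transposition, so any
of the tableaux may be replaced by its transpose. Write `n = m + 1`. Three facts are used.

* A tableau with at least two boxes is not its own transpose (`not_eqv_and_tr`). Hence if two
  tableaux agree except for the positions `a ≠ b` of `n`, then after applying `t_m` the restrictions
  are neither equal nor transposes of each other, unless `a` and `b` are both adjacent to the box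
  of `m` (`not_tEqv_bk`).
* The largest entry can be moved to any corner (`exists_move`).
* Two different cells `a`, `b` are both adjacent to at most one cell, so that suitable corners
  exist in all but very small diagrams (`exists_corner_two`, `exists_corner_three`,
  `exists_corner_four`).

If no two restrictions are equivalent, nothing has to be done. If all three are, up to transposition
they are equal; the entry `m` is moved to a corner adjacent to at most one of the three positions of
`n`, and `t_m` is applied. Finally suppose that `A` and `B` agree up to the positions `a`, `b` of
`n`, while the restriction of `C` is not equivalent to theirs. First, `m` is moved in `A` to a box
not adjacent to both `a` and `b`. If `A` and `C` are still inequivalent after deleting both `m` and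
`n`, then `t_m` does the job, because it does not move the entries below `m`. Otherwise `A` and `C`
agree up to `m - 1` and have `m` in different positions `d` and `u`. The entry `m - 1` is moved to a
corner of the common shape `ρ` which is neither adjacent to both `d` and `u` nor to both `a` and
`b`; then `t_{m-1}` makes `A` and `C` inequivalent below `m`, and `t_m` separates `A` from `B`.
-/

/-- A standard Young tableau of shape `μ`: a filling of the cells of `μ` by the
numbers `1, …, μ.card` (bijectively), strictly increasing along rows and columns,
with value `0` outside the diagram. -/
structure SYT (μ : YoungDiagram) where
  entry : ℕ → ℕ → ℕ
  zero_outside : ∀ i j, (i, j) ∉ μ → entry i j = 0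
  row_strict : ∀ i j1 j2, j1 < j2 → (i, j2) ∈ μ → entry i j1 < entry i j2
  col_strict : ∀ i1 i2 j, i1 < i2 → (i2, j) ∈ μ → entry i1 j < entry i2 j
  image_eq : μ.cells.image (fun c => entry c.1 c.2) = Finset.Icc 1 μ.card

theorem SYT.ext' {μ : YoungDiagram} {A B : SYT μ} (h : A.entry = B.entry) : A = B := by
  cases A; cases B; simp_all

/-- The involution of values swapping `k` and `k + 1`. -/
def swapVal (k x : ℕ) : ℕ := if x = k then k + 1 else if x = k + 1 then k else x

theorem swapVal_invol (k : ℕ) : Function.Involutive (swapVal k) := by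
  intro x; unfold swapVal; split_ifs <;> omega

open Classical in
/-- The Bender–Knuth involution `t_k` as a function: interchange the entries `k` and
`k + 1` if the result is again a standard Young tableau, and do nothing otherwise. -/
noncomputable def bkFun (μ : YoungDiagram) (k : ℕ) (T : SYT μ) : SYT μ :=
  if h : ∃ T' : SYT μ, T'.entry = fun i j => swapVal k (T.entry i j) then h.choose else T

theorem bkFun_pos {μ : YoungDiagram} {k : ℕ} {T : SYT μ}
    (h : ∃ T' : SYT μ, T'.entry = fun i j => swapVal k (T.entry i j)) :
    (bkFun μ k T).entry = fun i j => swapVal k (T.entry i j) := by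
  unfold bkFun; rw [dif_pos h]; exact h.choose_spec

theorem bkFun_neg {μ : YoungDiagram} {k : ℕ} {T : SYT μ}
    (h : ¬ ∃ T' : SYT μ, T'.entry = fun i j => swapVal k (T.entry i j)) :
    bkFun μ k T = T := by
  unfold bkFun; rw [dif_neg h]

theorem bkFun_invol (μ : YoungDiagram) (k : ℕ) : Function.Involutive (bkFun μ k) := by
  intro T
  by_cases h : ∃ T' : SYT μ, T'.entry = fun i j => swapVal k (T.entry i j)
  · have e1 : (bkFun μ k T).entry = fun i j => swapVal k (T.entry i j) := bkFun_pos h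
    have h2 : ∃ T'' : SYT μ, T''.entry = fun i j => swapVal k ((bkFun μ k T).entry i j) := by
      refine ⟨T, ?_⟩
      funext i j
      simp only [e1]
      exact (swapVal_invol k (T.entry i j)).symm
    apply SYT.ext'
    rw [bkFun_pos h2]
    funext i j
    simp only [e1]
    exact swapVal_invol k (T.entry i j)
  · rw [bkFun_neg h, bkFun_neg h]

/-- The Bender–Knuth involution `t_k` as a permutation of `SYT μ`. -/
noncomputable def BK (μ : YoungDiagram) (k : ℕ) : Equiv.Perm (SYT μ) :=
  (bkFun_invol μ k).toPerm

/-- The image of the cactus group `C_n` in the permutation group of `SYT μ`: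
the subgroup generated by the Bender–Knuth involutions `t_1, …, t_{n-1}`. -/
noncomputable def BKgroup (μ : YoungDiagram) : Subgroup (Equiv.Perm (SYT μ)) :=
  Subgroup.closure (BK μ '' Set.Icc 1 (μ.card - 1))

/-- The simultaneous Bender–Knuth involution `t_k` on pairs of tableaux. -/
noncomputable def BKpair (μ1 μ2 : YoungDiagram) (k : ℕ) : Equiv.Perm (SYT μ1 × SYT μ2) :=
  Equiv.prodCongr (BK μ1 k) (BK μ2 k)

/-- The image of the cactus group acting diagonally on pairs of tableaux. -/
noncomputable def BKpairGroup (μ1 μ2 : YoungDiagram) : Subgroup (Equiv.Perm (SYT μ1 × SYT μ2)) :=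
  Subgroup.closure (BKpair μ1 μ2 '' Set.Icc 1 (μ1.card - 1))

/-- The simultaneous Bender–Knuth involution `t_k` on triples of tableaux. -/
noncomputable def BKtriple (μ1 μ2 μ3 : YoungDiagram) (k : ℕ) :
    Equiv.Perm (SYT μ1 × SYT μ2 × SYT μ3) :=
  Equiv.prodCongr (BK μ1 k) (Equiv.prodCongr (BK μ2 k) (BK μ3 k))

/-- The image of the cactus group acting diagonally on triples of tableaux. -/
noncomputable def BKtripleGroup (μ1 μ2 μ3 : YoungDiagram) :
    Subgroup (Equiv.Perm (SYT μ1 × SYT μ2 × SYT μ3)) :=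
  Subgroup.closure (BKtriple μ1 μ2 μ3 '' Set.Icc 1 (μ1.card - 1))

/-- A partition is hook-shaped if its diagram has no box in position `(2,2)`
(in 1-indexed terms), i.e. no cell `(1,1)` in 0-indexed terms. -/
def HookShaped (μ : YoungDiagram) : Prop := (1, 1) ∉ μ

/-- A partition is almost hook-shaped if it is a hook plus the single box `(2,2)`. -/
def AlmostHookShaped (μ : YoungDiagram) : Prop :=
  (1, 1) ∈ μ ∧ (1, 2) ∉ μ ∧ (2, 1) ∉ μ

/-- The value `k` occurs in the first row of `A`. -/
def SYT.inFirstRow {μ : YoungDiagram} (A : SYT μ) (k : ℕ) : Prop :=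
  ∃ j, (0, j) ∈ μ ∧ A.entry 0 j = k

open scoped Classical in
/-- The set `S_{A,B}` of values lying in the first row of both `A` and `B`. -/
noncomputable def sharedFirstRow {μ1 μ2 : YoungDiagram} (A : SYT μ1) (B : SYT μ2) : Finset ℕ :=
  (Finset.Icc 1 μ1.card).filter (fun k => A.inFirstRow k ∧ B.inFirstRow k)

/-- Tableaux (possibly of different shapes) are equal, as fillings of the plane. -/
def EqTab {μ1 μ2 : YoungDiagram} (A : SYT μ1) (B : SYT μ2) : Prop := A.entry = B.entry

/-- `B` is the transpose of `A`. -/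
def EqTransposeTab {μ1 μ2 : YoungDiagram} (A : SYT μ1) (B : SYT μ2) : Prop :=
  ∀ i j, B.entry i j = A.entry j i

/-- A pair of partitions of the same `n` is viable if at most one of them is hook-shaped. -/
def ViablePairShape (μ1 μ2 : YoungDiagram) : Prop := ¬ (HookShaped μ1 ∧ HookShaped μ2)

/-- A pair of tableaux is viable if the pair of shapes is viable, the tableaux are
different and not transposes of each other. -/
def ViableTabPair {μ1 μ2 : YoungDiagram} (A : SYT μ1) (B : SYT μ2) : Prop :=
  ViablePairShape μ1 μ2 ∧ ¬ EqTab A B ∧ ¬ EqTransposeTab A B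

/-- A pair of partitions is base case if it is viable and either both are almost
hook-shaped or one is almost hook-shaped and the other is hook-shaped. -/
def BaseCasePair (μ1 μ2 : YoungDiagram) : Prop :=
  ViablePairShape μ1 μ2 ∧
    ((AlmostHookShaped μ1 ∧ AlmostHookShaped μ2) ∨
      (AlmostHookShaped μ1 ∧ HookShaped μ2) ∨ (HookShaped μ1 ∧ AlmostHookShaped μ2))

/-- A triple of partitions is viable if at most one of them is hook-shaped. -/
def ViableTripleShape (μ1 μ2 μ3 : YoungDiagram) : Prop :=
  ¬ (HookShaped μ1 ∧ HookShaped μ2) ∧ ¬ (HookShaped μ1 ∧ HookShaped μ3) ∧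
    ¬ (HookShaped μ2 ∧ HookShaped μ3)

/-- A triple of tableaux is viable if the shapes are viable, no two of the tableaux
are equal and no two are transposes of each other. -/
def ViableTabTriple {μ1 μ2 μ3 : YoungDiagram} (A : SYT μ1) (B : SYT μ2) (C : SYT μ3) : Prop :=
  ViableTripleShape μ1 μ2 μ3 ∧
    (¬ EqTab A B ∧ ¬ EqTab A C ∧ ¬ EqTab B C) ∧
    (¬ EqTransposeTab A B ∧ ¬ EqTransposeTab A C ∧ ¬ EqTransposeTab B C)

/-- A triple of partitions is base case if it is viable and either two of them are
almost hook-shaped, or one is almost hook-shaped and another one is hook-shaped. -/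
def BaseCaseTriple (μ1 μ2 μ3 : YoungDiagram) : Prop :=
  ViableTripleShape μ1 μ2 μ3 ∧
    ((AlmostHookShaped μ1 ∧ AlmostHookShaped μ2) ∨ (AlmostHookShaped μ1 ∧ AlmostHookShaped μ3) ∨
      (AlmostHookShaped μ2 ∧ AlmostHookShaped μ3) ∨
      (AlmostHookShaped μ1 ∧ (HookShaped μ2 ∨ HookShaped μ3)) ∨
      (AlmostHookShaped μ2 ∧ (HookShaped μ1 ∨ HookShaped μ3)) ∨
      (AlmostHookShaped μ3 ∧ (HookShaped μ1 ∨ HookShaped μ2)))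

/-- `A'` is the tableau obtained from `A` by deleting the box containing the largest
entry `n = μ.card`: its shape is contained in that of `A`, has one box fewer, and its
entries agree with those of `A`. -/
def IsRestriction {μ ν : YoungDiagram} (A : SYT μ) (A' : SYT ν) : Prop :=
  ν.cells ⊆ μ.cells ∧ ν.card + 1 = μ.card ∧ ∀ c ∈ ν.cells, A'.entry c.1 c.2 = A.entry c.1 c.2

/-- A box `c` of `μ` is a corner if some standard Young tableau of shape `μ` has the
largest entry `n = μ.card` in that box. -/
def IsCornerBox (μ : YoungDiagram) (c : ℕ × ℕ) : Prop :=
  c ∈ μ ∧ ∃ A : SYT μ, A.entry c.1 c.2 = μ.card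

/-- `μ` has at least two corners. -/
def HasTwoCorners (μ : YoungDiagram) : Prop :=
  ∃ c c' : ℕ × ℕ, c ≠ c' ∧ IsCornerBox μ c ∧ IsCornerBox μ c'

/-- The number of fixed points of a permutation of `SYT μ`. -/
noncomputable def fixedCount {μ : YoungDiagram} (g : Equiv.Perm (SYT μ)) : ℕ :=
  Nat.card {A : SYT μ // g A = A}

/-! ### Corners of diagrams -/

/-- The cell `y` is the right or the lower neighbour of the cell `x`. -/
def Adj (x y : ℕ × ℕ) : Prop := y = (x.1 + 1, x.2) ∨ y = (x.1, x.2 + 1)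

/-- A finite set of cells closed under moving one step up or one step left, i.e. a
Young diagram presented as a plain finite set. -/
def Low (ρ : Finset (ℕ × ℕ)) : Prop :=
  ∀ i j, ((i + 1, j) ∈ ρ → (i, j) ∈ ρ) ∧ ((i, j + 1) ∈ ρ → (i, j) ∈ ρ)

/-- A corner of a diagram: a cell with no right and no lower neighbour in the diagram. -/
def Corner (ρ : Finset (ℕ × ℕ)) (e : ℕ × ℕ) : Prop :=
  e ∈ ρ ∧ (e.1 + 1, e.2) ∉ ρ ∧ (e.1, e.2 + 1) ∉ ρ

/-- A cell outside a diagram whose addition yields a diagram again. -/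
def Addable (ρ : Finset (ℕ × ℕ)) (x : ℕ × ℕ) : Prop :=
  x ∉ ρ ∧ (∀ i, x.1 = i + 1 → (i, x.2) ∈ ρ) ∧ (∀ j, x.2 = j + 1 → (x.1, j) ∈ ρ)

theorem exists_corner_right {ρ : Finset (ℕ × ℕ)} (h : ρ.Nonempty) :
    ∃ c k, Corner ρ (c, k) ∧ ∀ i j, (i, j) ∈ ρ → j ≤ k := by
  obtain ⟨⟨c, k⟩, hx, hm⟩ := Finset.exists_max_image ρ (fun x => toLex (x.2, x.1)) h
  simp only [Prod.Lex.toLex_le_toLex] at hm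
  refine ⟨c, k, ⟨hx, fun h => ?_, fun h => ?_⟩, fun i j h => ?_⟩ <;>
  · have := hm _ h
    simp only at this
    omega

theorem exists_corner_bot {ρ : Finset (ℕ × ℕ)} (h : ρ.Nonempty) :
    ∃ r c, Corner ρ (r, c) ∧ ∀ i j, (i, j) ∈ ρ → i ≤ r := by
  obtain ⟨⟨c, k⟩, hx, hm⟩ := Finset.exists_max_image ρ (fun x => toLex (x.1, x.2)) h
  simp only [Prod.Lex.toLex_le_toLex] at hm
  refine ⟨c, k, ⟨hx, fun h => ?_, fun h => ?_⟩, fun i j h => ?_⟩ <;>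
  · have := hm _ h
    simp only at this
    omega

theorem exists_corner_ge {ρ : Finset (ℕ × ℕ)} {a b : ℕ} (h : (a, b) ∈ ρ) :
    ∃ r c, Corner ρ (r, c) ∧ a ≤ r ∧ b ≤ c := by
  obtain ⟨⟨c, k⟩, hx, hm⟩ := Finset.exists_max_image
    (ρ.filter fun x => a ≤ x.1 ∧ b ≤ x.2) (fun x => x.1 + x.2) ⟨(a, b), by simp [h]⟩
  simp only [Finset.mem_filter] at hx hm
  refine ⟨c, k, ⟨hx.1, fun h => ?_, fun h => ?_⟩, hx.2.1, hx.2.2⟩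
  · have := hm _ ⟨h, by simp; omega⟩
    simp only at this; omega
  · have := hm _ ⟨h, by simp; omega⟩
    simp only at this; omega

theorem Low.le {ρ : Finset (ℕ × ℕ)} (h : Low ρ) {a b i j : ℕ} (hx : (a, b) ∈ ρ)
    (hi : i ≤ a) (hj : j ≤ b) : (i, j) ∈ ρ := by
  have h1 : (i, b) ∈ ρ := Nat.decreasingInduction (motive := fun m _ => (m, b) ∈ ρ)
    (fun m _ hm => (h m b).1 hm) hx hi
  exact Nat.decreasingInduction (motive := fun m _ => (i, m) ∈ ρ)
    (fun m _ hm => (h i m).2 hm) h1 hj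

/-- Two different cells adjacent to `(i, j)` are its right and its lower neighbour. -/
theorem adj_pair {i j : ℕ} {a b : ℕ × ℕ} (hab : a ≠ b) (h : Adj (i, j) a ∧ Adj (i, j) b) :
    (a = (i + 1, j) ∧ b = (i, j + 1)) ∨ (b = (i + 1, j) ∧ a = (i, j + 1)) := by
  rcases h with ⟨h1 | h1, h2 | h2⟩ <;> simp_all

theorem addable_of_pair {ρ : Finset (ℕ × ℕ)} {i j : ℕ} {a b : ℕ × ℕ} (hab : a ≠ b)
    (ha : Addable ρ a) (hb : Addable ρ b) (h : Adj (i, j) a ∧ Adj (i, j) b) :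
    Addable ρ (i + 1, j) ∧ Addable ρ (i, j + 1) := by
  rcases adj_pair hab h with ⟨rfl, rfl⟩ | ⟨rfl, rfl⟩ <;> exact ⟨‹_›, ‹_›⟩

/-- A cell is determined by its right and its lower neighbour. -/
theorem adj_pair_unique {i j i' j' : ℕ} {a b : ℕ × ℕ} (hab : a ≠ b)
    (h : Adj (i, j) a ∧ Adj (i, j) b) (h' : Adj (i', j') a ∧ Adj (i', j') b) :
    i = i' ∧ j = j' := by
  rcases adj_pair hab h with ⟨rfl, rfl⟩ | ⟨rfl, rfl⟩ <;>
  rcases adj_pair hab h' with ⟨h1, h2⟩ | ⟨h1, h2⟩ <;>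
  simp only [Prod.mk.injEq] at h1 h2 <;> omega

theorem addable_right {ρ : Finset (ℕ × ℕ)} {c k : ℕ} (hk : ∀ i j, (i, j) ∈ ρ → j ≤ k)
    (h : Addable ρ (c, k + 1)) : c = 0 := by
  rcases c with _ | c
  · rfl
  · have := hk _ _ (h.2.1 c rfl); omega

theorem addable_bot {ρ : Finset (ℕ × ℕ)} {r c : ℕ} (hr : ∀ i j, (i, j) ∈ ρ → i ≤ r)
    (h : Addable ρ (r + 1, c)) : c = 0 := by
  rcases c with _ | c
  · rfl
  · have := hr _ _ (h.2.2 c rfl); omega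

/-- If the rightmost and the bottommost corner were both adjacent to `a` and `b`, they would
coincide with the origin, which is then the only cell of `ρ`. -/
theorem exists_corner_two {ρ : Finset (ℕ × ℕ)} {a b : ℕ × ℕ} (hab : a ≠ b)
    (ha : Addable ρ a) (hb : Addable ρ b) (hcard : 2 ≤ ρ.card) :
    ∃ e, Corner ρ e ∧ ¬ (Adj e a ∧ Adj e b) := by
  by_contra! hcon
  have hne : ρ.Nonempty := Finset.card_pos.1 (by omega)
  obtain ⟨c, k, hy, hk⟩ := exists_corner_right hne
  obtain ⟨r, c2, hx, hr⟩ := exists_corner_bot hne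
  have by' := hcon _ hy
  have bx' := hcon _ hx
  have h1 := addable_right hk (addable_of_pair hab ha hb by').2
  have h2 := addable_bot hr (addable_of_pair hab ha hb bx').1
  have h3 := adj_pair_unique hab by' bx'
  have : ρ ⊆ {(0, 0)} := by
    rintro ⟨i, j⟩ h
    have := hk _ _ h
    have := hr _ _ h
    simp; omega
  have := Finset.card_le_card this
  simp at this; omega

/-- Every diagram with at least four cells has a corner adjacent to at most one of three given
addable cells. -/
theorem exists_corner_three {ρ : Finset (ℕ × ℕ)} {a b c : ℕ × ℕ} (hL : Low ρ)
    (hab : a ≠ b) (hac : a ≠ c) (hbc : b ≠ c)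
    (ha : Addable ρ a) (hb : Addable ρ b) (hc : Addable ρ c) (hcard : 4 ≤ ρ.card) :
    ∃ e, Corner ρ e ∧ ¬ (Adj e a ∧ Adj e b) ∧ ¬ (Adj e a ∧ Adj e c) ∧
      ¬ (Adj e b ∧ Adj e c) := by
  by_contra! hcon
  have hcon' : ∀ i j, Corner ρ (i, j) →
      ((i + 1, j) = a ∨ (i + 1, j) = b ∨ (i + 1, j) = c) ∧
      ((i, j + 1) = a ∨ (i, j + 1) = b ∨ (i, j + 1) = c) := by
    intro i j he
    have := hcon _ he
    by_cases h1 : Adj (i, j) a ∧ Adj (i, j) b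
    · rcases adj_pair hab h1 with ⟨h, h'⟩ | ⟨h, h'⟩ <;> simp [h, h']
    by_cases h2 : Adj (i, j) a ∧ Adj (i, j) c
    · rcases adj_pair hac h2 with ⟨h, h'⟩ | ⟨h, h'⟩ <;> simp [h, h']
    by_cases h3 : Adj (i, j) b ∧ Adj (i, j) c
    · rcases adj_pair hbc h3 with ⟨h, h'⟩ | ⟨h, h'⟩ <;> simp [h, h']
    exact absurd (this (fun x y => h1 ⟨x, y⟩) (fun x y => h2 ⟨x, y⟩)) (fun h => h3 h)
  have hne : ρ.Nonempty := Finset.card_pos.1 (by omega)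
  obtain ⟨i, k, hy, hk⟩ := exists_corner_right hne
  obtain ⟨r, j, hx, hr⟩ := exists_corner_bot hne
  obtain ⟨y1, y2⟩ := hcon' _ _ hy
  obtain ⟨x1, x2⟩ := hcon' _ _ hx
  have hi : i = 0 := addable_right hk (by rcases y2 with h | h | h <;> rw [h] <;> assumption)
  have hj : j = 0 := addable_bot hr (by rcases x1 with h | h | h <;> rw [h] <;> assumption)
  subst hi hj
  -- the four neighbours of the two extreme corners are among the three cells `a`, `b`, `c`
  have hrk : r ≤ 1 ∧ k ≤ 1 := by
    obtain ⟨a1, a2⟩ := a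
    obtain ⟨b1, b2⟩ := b
    obtain ⟨c1, c2⟩ := c
    simp only [Prod.mk.injEq] at y1 y2 x1 x2
    omega
  have : ρ ⊆ {(0, 0), (0, 1), (1, 0)} := by
    rintro ⟨i, j⟩ h
    have h1 := hk _ _ h
    have h2 := hr _ _ h
    have h3 : ¬ (1 ≤ i ∧ k ≤ j) := fun h' => hy.2.1 (hL.le h h'.1 h'.2)
    have h4 : ¬ (r ≤ i ∧ 1 ≤ j) := fun h' => hx.2.2 (hL.le h h'.1 h'.2)
    simp only [Finset.mem_insert, Finset.mem_singleton, Prod.mk.injEq]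
    omega
  have := (Finset.card_le_card this).trans Finset.card_le_three
  omega

/-- The critical selection: `ρ` can be grown by `d` or by `u`, and `ρ ∪ {d}` by `a` or by `b`.
If every corner of `ρ` were adjacent to both of `d`, `u` or to both of `a`, `b`, then the
rightmost and the bottommost corner would force `ρ` to have at most four cells. -/
theorem exists_corner_four {ρ : Finset (ℕ × ℕ)} {a b d u : ℕ × ℕ} (hL : Low ρ)
    (hab : a ≠ b) (hdu : d ≠ u) (hd : Addable ρ d) (hu : Addable ρ u)
    (ha : Addable (insert d ρ) a) (hb : Addable (insert d ρ) b) (hcard : 5 ≤ ρ.card) :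
    ∃ e, Corner ρ e ∧ ¬ (Adj e d ∧ Adj e u) ∧ ¬ (Adj e a ∧ Adj e b) := by
  by_contra! hcon
  replace hcon : ∀ i j, Corner ρ (i, j) →
      (Adj (i, j) d ∧ Adj (i, j) u) ∨ (Adj (i, j) a ∧ Adj (i, j) b) := by
    intro i j he
    by_cases h : Adj (i, j) d ∧ Adj (i, j) u
    · exact Or.inl h
    · exact Or.inr (hcon _ he (fun x y => h ⟨x, y⟩))
  have hne : ρ.Nonempty := Finset.card_pos.1 (by omega)
  obtain ⟨i, k, hy, hk⟩ := exists_corner_right hne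
  obtain ⟨r, j, hx, hr⟩ := exists_corner_bot hne
  have hir : i ≤ r := hr _ _ hy.1
  have hjk : j ≤ k := hk _ _ hx.1
  have small : ∀ s : Finset (ℕ × ℕ), s.card ≤ 4 → ¬ ρ ⊆ s := fun s hs h => by
    have := Finset.card_le_card h; omega
  rcases hcon _ _ hy with y | y <;> rcases hcon _ _ hx with x | x
  · -- one cell carries `d`, `u` and is both extreme corners: `ρ` is a single cell
    have h1 := addable_right hk (addable_of_pair hdu hd hu y).2
    have h2 := addable_bot hr (addable_of_pair hdu hd hu x).1
    have h3 := adj_pair_unique hdu x y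
    refine small {(0, 0)} (by simp) ?_
    rintro ⟨s, t⟩ h
    have := hk _ _ h
    have := hr _ _ h
    simp only [Finset.mem_singleton, Prod.mk.injEq]
    omega
  · -- `ρ` is contained in the hook with row lengths `2, 1, 1`
    have h1 := addable_of_pair hdu hd hu y
    have h2 := addable_of_pair hab ha hb x
    have hi := addable_right hk h1.2
    subst hi
    have hd' : d = (1, k) ∨ d = (0, k + 1) := by
      rcases adj_pair hdu y with h | h <;> simp [h]
    have hj : j = 0 := by
      rcases j with _ | j
      · rfl
      rcases Finset.mem_insert.1 (h2.1.2.2 j rfl) with h | h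
      · rcases hd' with h' | h' <;> rw [h'] at h <;> simp only [Prod.mk.injEq] at h <;> omega
      · have := hr _ _ h; omega
    subst hj
    have hk1 : k ≤ 1 := by
      rcases k with _ | _ | k
      · simp
      · simp
      -- a corner weakly below `(1, k + 1)` is a third corner
      obtain ⟨s, t, hz, hs, ht⟩ := exists_corner_ge (h1.1.2.2 (k + 1) rfl)
      rcases hcon _ _ hz with z | z
      · have := adj_pair_unique hdu y z; omega
      · have := adj_pair_unique hab x z; omega
    have hr2 : r ≤ 2 := by
      rcases r with _ | r
      · simp
      rcases Finset.mem_insert.1 (h2.2.2.1 r rfl) with h | h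
      · rcases hd' with h' | h' <;> rw [h'] at h <;> simp only [Prod.mk.injEq] at h <;> omega
      · by_contra hr'
        have h3 := hk _ _ h
        have : k = 1 := by omega
        subst this
        exact h1.1.1 (hL.le h (by omega) le_rfl)
    refine small {(0, 0), (0, 1), (1, 0), (2, 0)} Finset.card_le_four ?_
    rintro ⟨s, t⟩ h
    have h3 := hk _ _ h
    have h4 := hr _ _ h
    have h5 : ¬ (1 ≤ s ∧ k ≤ t) := fun h' => hy.2.1 (hL.le h h'.1 h'.2)
    have h6 : ¬ (r ≤ s ∧ 1 ≤ t) := fun h' => hx.2.2 (hL.le h h'.1 h'.2)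
    simp only [Finset.mem_insert, Finset.mem_singleton, Prod.mk.injEq]
    omega
  · -- `ρ` is contained in the hook with row lengths `3, 1`
    have h1 := addable_of_pair hdu hd hu x
    have h2 := addable_of_pair hab ha hb y
    have hj := addable_bot hr h1.1
    subst hj
    have hd' : d = (r + 1, 0) ∨ d = (r, 1) := by
      rcases adj_pair hdu x with h | h <;> simp [h]
    have hi : i = 0 := by
      rcases i with _ | i
      · rfl
      rcases Finset.mem_insert.1 (h2.2.2.1 i rfl) with h | h
      · rcases hd' with h' | h' <;> rw [h'] at h <;> simp only [Prod.mk.injEq] at h <;> omega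
      · have := hk _ _ h; omega
    subst hi
    have hr1 : r ≤ 1 := by
      rcases r with _ | _ | r
      · simp
      · simp
      obtain ⟨s, t, hz, hs, ht⟩ := exists_corner_ge (h1.2.2.1 (r + 1) rfl)
      rcases hcon _ _ hz with z | z
      · have := adj_pair_unique hdu x z; omega
      · have := adj_pair_unique hab y z; omega
    have hk2 : k ≤ 2 := by
      rcases k with _ | k
      · simp
      rcases Finset.mem_insert.1 (h2.1.2.2 k rfl) with h | h
      · rcases hd' with h' | h' <;> rw [h'] at h <;> simp only [Prod.mk.injEq] at h <;> omega
      · by_contra hr'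
        have h3 := hr _ _ h
        have : r = 1 := by omega
        subst this
        exact h1.2.1 (hL.le h le_rfl (by omega))
    refine small {(0, 0), (1, 0), (0, 1), (0, 2)} Finset.card_le_four ?_
    rintro ⟨s, t⟩ h
    have h3 := hk _ _ h
    have h4 := hr _ _ h
    have h5 : ¬ (1 ≤ s ∧ k ≤ t) := fun h' => hy.2.1 (hL.le h h'.1 h'.2)
    have h6 : ¬ (r ≤ s ∧ 1 ≤ t) := fun h' => hx.2.2 (hL.le h h'.1 h'.2)
    simp only [Finset.mem_insert, Finset.mem_singleton, Prod.mk.injEq]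
    omega
  · -- `ρ` is a rectangle, contained in the two by two square
    have h3 := adj_pair_unique hab x y
    obtain ⟨h1, h2⟩ := addable_of_pair hab ha hb y
    have hi : i ≤ 1 := by
      rcases i with _ | _ | i
      · simp
      · simp
      have := h2.2.1 (i + 1) rfl
      rcases Finset.mem_insert.1 this with h | h
      · have := hk _ _ (hd.2.1 i (by rw [← h]))
        rw [← h] at this; simp at this
      · have := hk _ _ h; omega
    have hj : k ≤ 1 := by
      rcases k with _ | _ | k
      · simp
      · simp
      have := h1.2.2 (k + 1) rfl
      rcases Finset.mem_insert.1 this with h | h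
      · have := hr _ _ (hd.2.2 k (by rw [← h]))
        rw [← h] at this; simp at this; omega
      · have := hr _ _ h; omega
    refine small {(0, 0), (0, 1), (1, 0), (1, 1)} Finset.card_le_four ?_
    rintro ⟨s, t⟩ h
    have := hk _ _ h
    have := hr _ _ h
    simp only [Finset.mem_insert, Finset.mem_singleton, Prod.mk.injEq]
    omega

/-! ### Tableaux as sequences of cells -/

/-- A standard Young tableau with entries `1, …, n`, encoded by the sequence of its cells:
`f k` is the cell containing `k`. The cells are distinct, and the cell above and the cell
to the left of `f k`, where they exist, contain smaller entries. Values of `f` outside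
`1, …, n` are irrelevant. -/
def Std (n : ℕ) (f : ℕ → ℕ × ℕ) : Prop :=
  (∀ k l, 1 ≤ k → k ≤ n → 1 ≤ l → l ≤ n → f k = f l → k = l) ∧
  (∀ k i j, 1 ≤ k → k ≤ n → f k = (i + 1, j) → ∃ l, 1 ≤ l ∧ l < k ∧ f l = (i, j)) ∧
  (∀ k i j, 1 ≤ k → k ≤ n → f k = (i, j + 1) → ∃ l, 1 ≤ l ∧ l < k ∧ f l = (i, j))

open Classical in
/-- The Bender–Knuth involution `t_k` on cell sequences. -/
noncomputable def bk (k : ℕ) (f : ℕ → ℕ × ℕ) : ℕ → ℕ × ℕ :=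
  if Adj (f k) (f (k + 1)) then f else fun x => f (swapVal k x)

/-- The action of a word in the Bender–Knuth involutions; the last letter acts first. -/
noncomputable def act : List ℕ → (ℕ → ℕ × ℕ) → ℕ → ℕ × ℕ
  | [], f => f
  | k :: w, f => bk k (act w f)

/-- The words representing elements of the cactus group `C_n`. -/
def Word (n : ℕ) (w : List ℕ) : Prop := ∀ k ∈ w, 1 ≤ k ∧ k < n

/-- Two cell sequences encode the same tableau with `m` boxes. -/
def Eqv (m : ℕ) (f g : ℕ → ℕ × ℕ) : Prop := ∀ k, 1 ≤ k → k ≤ m → f k = g k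

/-- The cell sequence of the transposed tableau. -/
def tr (f : ℕ → ℕ × ℕ) : ℕ → ℕ × ℕ := fun k => (f k).swap

/-- Equality of the tableaux with `m` boxes up to transposition. -/
def TEqv (m : ℕ) (f g : ℕ → ℕ × ℕ) : Prop := Eqv m f g ∨ Eqv m f (tr g)

/-- The diagram formed by the boxes containing `1, …, m`. -/
def cells (f : ℕ → ℕ × ℕ) (m : ℕ) : Finset (ℕ × ℕ) := (Finset.Icc 1 m).image f

theorem mem_cells {f : ℕ → ℕ × ℕ} {m : ℕ} {x : ℕ × ℕ} :
    x ∈ cells f m ↔ ∃ l, 1 ≤ l ∧ l ≤ m ∧ f l = x := by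
  simp [cells, and_assoc]

theorem cells_succ (f : ℕ → ℕ × ℕ) (m : ℕ) : cells f (m + 1) = insert (f (m + 1)) (cells f m) := by
  ext x
  simp only [mem_cells, Finset.mem_insert]
  constructor
  · rintro ⟨l, h1, h2, h3⟩
    rcases Nat.lt_or_ge m l with h | h
    · left; rw [← h3]; congr 1; omega
    · exact Or.inr ⟨l, h1, h, h3⟩
  · rintro (h | ⟨l, h1, h2, h3⟩)
    · exact ⟨m + 1, by omega, le_rfl, h.symm⟩
    · exact ⟨l, h1, by omega, h3⟩

theorem Eqv.cells {f g : ℕ → ℕ × ℕ} {m : ℕ} (h : Eqv m f g) : cells f m = cells g m := by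
  ext x
  simp only [mem_cells]
  constructor <;> rintro ⟨l, h1, h2, h3⟩ <;> exact ⟨l, h1, h2, by rw [← h3, h l h1 h2]⟩

theorem Eqv.symm {f g : ℕ → ℕ × ℕ} {m : ℕ} (h : Eqv m f g) : Eqv m g f :=
  fun k h1 h2 => (h k h1 h2).symm

theorem Eqv.trans {f g e : ℕ → ℕ × ℕ} {m : ℕ} (h : Eqv m f g) (h' : Eqv m g e) : Eqv m f e :=
  fun k h1 h2 => (h k h1 h2).trans (h' k h1 h2)

theorem Eqv.mono {f g : ℕ → ℕ × ℕ} {m l : ℕ} (h : Eqv m f g) (hl : l ≤ m) : Eqv l f g :=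
  fun k h1 h2 => h k h1 (h2.trans hl)

theorem Eqv.succ {f g : ℕ → ℕ × ℕ} {m : ℕ} (h : Eqv m f g) (h' : f (m + 1) = g (m + 1)) :
    Eqv (m + 1) f g := by
  intro k h1 h2
  rcases Nat.lt_or_ge m k with h3 | h3
  · have : k = m + 1 := by omega
    rw [this, h']
  · exact h k h1 h3

theorem tr_tr (f : ℕ → ℕ × ℕ) : tr (tr f) = f := by
  funext k; simp [tr]

theorem Eqv.tr {f g : ℕ → ℕ × ℕ} {m : ℕ} (h : Eqv m f g) : Eqv m (tr f) (tr g) :=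
  fun k h1 h2 => congrArg Prod.swap (h k h1 h2)

theorem TEqv.symm {f g : ℕ → ℕ × ℕ} {m : ℕ} (h : TEqv m f g) : TEqv m g f := by
  rcases h with h | h
  · exact Or.inl h.symm
  · right; simpa [tr_tr] using h.symm.tr

theorem TEqv.mono {f g : ℕ → ℕ × ℕ} {m l : ℕ} (h : TEqv m f g) (hl : l ≤ m) : TEqv l f g :=
  h.imp (fun h => h.mono hl) (fun h => h.mono hl)

theorem tEqv_tr_right {f g : ℕ → ℕ × ℕ} {m : ℕ} : TEqv m f (tr g) ↔ TEqv m f g := by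
  unfold TEqv; rw [tr_tr, or_comm]

theorem tEqv_comm {f g : ℕ → ℕ × ℕ} {m : ℕ} : TEqv m f g ↔ TEqv m g f := ⟨TEqv.symm, TEqv.symm⟩

theorem tEqv_tr_left {f g : ℕ → ℕ × ℕ} {m : ℕ} : TEqv m (tr f) g ↔ TEqv m f g := by
  rw [tEqv_comm, tEqv_tr_right, tEqv_comm]

theorem Eqv.tEqv_left {f g e : ℕ → ℕ × ℕ} {m : ℕ} (h : Eqv m f g) (h' : TEqv m f e) : TEqv m g e :=
  h'.imp (fun h' => h.symm.trans h') (fun h' => h.symm.trans h')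

theorem adj_swap {x y : ℕ × ℕ} : Adj x.swap y.swap ↔ Adj x y := by
  rcases x with ⟨a, b⟩; rcases y with ⟨c, d⟩
  simp only [Adj, Prod.swap_prod_mk, Prod.mk.injEq]
  tauto

theorem bk_pos {k : ℕ} {f : ℕ → ℕ × ℕ} (h : Adj (f k) (f (k + 1))) : bk k f = f := by
  unfold bk; rw [if_pos h]

theorem bk_neg {k : ℕ} {f : ℕ → ℕ × ℕ} (h : ¬ Adj (f k) (f (k + 1))) :
    bk k f = fun x => f (swapVal k x) := by
  unfold bk; rw [if_neg h]

theorem bk_tr (k : ℕ) (f : ℕ → ℕ × ℕ) : bk k (tr f) = tr (bk k f) := by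
  have : Adj (tr f k) (tr f (k + 1)) ↔ Adj (f k) (f (k + 1)) := adj_swap
  by_cases h : Adj (f k) (f (k + 1))
  · rw [bk_pos h, bk_pos (this.2 h)]
  · rw [bk_neg h, bk_neg (mt this.1 h)]; rfl

theorem act_tr (w : List ℕ) (f : ℕ → ℕ × ℕ) : act w (tr f) = tr (act w f) := by
  induction w with
  | nil => rfl
  | cons k w ih => rw [act, ih, bk_tr]; rfl

theorem act_append (w w' : List ℕ) (f : ℕ → ℕ × ℕ) : act (w ++ w') f = act w (act w' f) := by
  induction w with
  | nil => rfl
  | cons k w ih => simp only [List.cons_append, act, ih]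

theorem swapVal_mem {n k x : ℕ} (hk : 1 ≤ k) (hkn : k < n) (h1 : 1 ≤ x) (h2 : x ≤ n) :
    1 ≤ swapVal k x ∧ swapVal k x ≤ n := by
  unfold swapVal; split_ifs <;> omega

theorem bk_eqv {n k : ℕ} {f g : ℕ → ℕ × ℕ} (hk : 1 ≤ k) (hkn : k < n) (h : Eqv n f g) :
    Eqv n (bk k f) (bk k g) := by
  unfold bk
  rw [h k hk hkn.le, h (k + 1) (by omega) hkn]
  intro x h1 h2
  have := swapVal_mem hk hkn h1 h2
  split_ifs
  · exact h x h1 h2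
  · exact h _ this.1 this.2

theorem swapVal_of_ne {k x : ℕ} (h : x ≠ k) (h' : x ≠ k + 1) : swapVal k x = x := by
  unfold swapVal; rw [if_neg h, if_neg h']

theorem swapVal_left (k : ℕ) : swapVal k k = k + 1 := by simp [swapVal]

theorem swapVal_right (k : ℕ) : swapVal k (k + 1) = k := by simp [swapVal]

theorem bk_of_ne {k x : ℕ} (f : ℕ → ℕ × ℕ) (h : x ≠ k) (h' : x ≠ k + 1) : bk k f x = f x := by
  by_cases hadj : Adj (f k) (f (k + 1))
  · rw [bk_pos hadj]
  · rw [bk_neg hadj]; simp only [swapVal_of_ne h h']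

theorem bk_of_lt {k x : ℕ} (f : ℕ → ℕ × ℕ) (h : x < k) : bk k f x = f x :=
  bk_of_ne f (by omega) (by omega)

theorem bk_of_gt {k x : ℕ} (f : ℕ → ℕ × ℕ) (h : k + 1 < x) : bk k f x = f x :=
  bk_of_ne f (by omega) (by omega)

theorem bk_low (k : ℕ) (f : ℕ → ℕ × ℕ) : Eqv k (bk (k + 1) f) f :=
  fun _ _ h => bk_of_lt f (by omega)

open Classical in
theorem bk_self (k : ℕ) (f : ℕ → ℕ × ℕ) :
    bk k f k = if Adj (f k) (f (k + 1)) then f k else f (k + 1) := by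
  split_ifs with h
  · rw [bk_pos h]
  · rw [bk_neg h]; simp only [swapVal_left]

open Classical in
theorem bk_succ (k : ℕ) (f : ℕ → ℕ × ℕ) :
    bk k f (k + 1) = if Adj (f k) (f (k + 1)) then f (k + 1) else f k := by
  split_ifs with h
  · rw [bk_pos h]
  · rw [bk_neg h]; simp only [swapVal_right]

theorem Std.mono {n m : ℕ} {f : ℕ → ℕ × ℕ} (h : Std n f) (hm : m ≤ n) : Std m f :=
  ⟨fun k l h1 h2 h3 h4 => h.1 k l h1 (h2.trans hm) h3 (h4.trans hm),
    fun k i j h1 h2 => h.2.1 k i j h1 (h2.trans hm),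
    fun k i j h1 h2 => h.2.2 k i j h1 (h2.trans hm)⟩

theorem Std.tr {n : ℕ} {f : ℕ → ℕ × ℕ} (h : Std n f) : Std n (tr f) := by
  refine ⟨fun k l h1 h2 h3 h4 he => h.1 k l h1 h2 h3 h4 (Prod.swap_injective he), ?_, ?_⟩
  · intro k i j h1 h2 he
    obtain ⟨l, h3, h4, h5⟩ := h.2.2 k j i h1 h2 (by rw [← Prod.swap_inj]; exact he)
    exact ⟨l, h3, h4, by simp [_root_.tr, h5]⟩
  · intro k i j h1 h2 he
    obtain ⟨l, h3, h4, h5⟩ := h.2.1 k j i h1 h2 (by rw [← Prod.swap_inj]; exact he)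
    exact ⟨l, h3, h4, by simp [_root_.tr, h5]⟩

theorem swapVal_lt {k l s : ℕ} (h : l < s) (hne : ¬ (l = k ∧ s = k + 1)) :
    swapVal k l < swapVal k s := by
  unfold swapVal; split_ifs <;> omega

theorem Std.bk {n k : ℕ} {f : ℕ → ℕ × ℕ} (h : Std n f) (hk : 1 ≤ k) (hkn : k < n) :
    Std n (bk k f) := by
  unfold _root_.bk
  split_ifs with hadj
  · exact h
  have key : ∀ x l y, 1 ≤ x → x ≤ n → 1 ≤ l → l < swapVal k x → f l = y →
      Adj y (f (swapVal k x)) → ∃ l', 1 ≤ l' ∧ l' < x ∧ f (swapVal k l') = y := by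
    intro x l y h1 h2 h3 h4 h5 h6
    have hm := swapVal_mem hk hkn h1 h2
    refine ⟨swapVal k l, (swapVal_mem hk hkn h3 (by omega)).1, ?_, ?_⟩
    · have := swapVal_lt (k := k) h4 (by
        rintro ⟨h7, h8⟩
        rw [h8, ← h5, h7] at h6
        exact hadj h6)
      rwa [swapVal_invol k x] at this
    · rw [swapVal_invol k l, h5]
  refine ⟨?_, ?_, ?_⟩
  · intro x y h1 h2 h3 h4 he
    have hx := swapVal_mem hk hkn h1 h2
    have hy := swapVal_mem hk hkn h3 h4
    exact (swapVal_invol k).injective (h.1 _ _ hx.1 hx.2 hy.1 hy.2 he)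
  · intro x i j h1 h2 he
    have hx := swapVal_mem hk hkn h1 h2
    obtain ⟨l, h3, h4, h5⟩ := h.2.1 _ i j hx.1 hx.2 he
    exact key x l _ h1 h2 h3 h4 h5 (by simp only [he]; exact Or.inl rfl)
  · intro x i j h1 h2 he
    have hx := swapVal_mem hk hkn h1 h2
    obtain ⟨l, h3, h4, h5⟩ := h.2.2 _ i j hx.1 hx.2 he
    exact key x l _ h1 h2 h3 h4 h5 (by simp only [he]; exact Or.inr rfl)

theorem Std.not_adj {n k l : ℕ} {f : ℕ → ℕ × ℕ} (h : Std n f) (hk : 1 ≤ k) (hkl : k ≤ l)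
    (hl : l ≤ n) : ¬ Adj (f l) (f k) := by
  rintro (h1 | h1)
  · obtain ⟨x, h2, h3, h4⟩ := h.2.1 k _ _ hk (by omega) h1
    have := h.1 x l h2 (by omega) (by omega) hl h4
    omega
  · obtain ⟨x, h2, h3, h4⟩ := h.2.2 k _ _ hk (by omega) h1
    have := h.1 x l h2 (by omega) (by omega) hl h4
    omega

theorem bk_bk {n k : ℕ} {f : ℕ → ℕ × ℕ} (h : Std n f) (hk : 1 ≤ k) (hkn : k < n) :
    bk k (bk k f) = f := by
  by_cases hadj : Adj (f k) (f (k + 1))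
  · rw [bk_pos hadj, bk_pos hadj]
  · have h2 : ¬ Adj (bk k f k) (bk k f (k + 1)) := by
      rw [bk_self, bk_succ, if_neg hadj, if_neg hadj]
      exact h.not_adj hk (by omega) hkn
    rw [bk_neg h2, bk_neg hadj]
    funext x
    simp only [swapVal_invol k x]

theorem Word.mono {n m : ℕ} {w : List ℕ} (h : Word m w) (hm : m ≤ n) : Word n w :=
  fun k hk => ⟨(h k hk).1, (h k hk).2.trans_le hm⟩

theorem Word.append {n : ℕ} {w w' : List ℕ} (h : Word n w) (h' : Word n w') :
    Word n (w ++ w') := by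
  intro k hk
  rcases List.mem_append.1 hk with hk | hk
  · exact h k hk
  · exact h' k hk

theorem Word.cons {n k : ℕ} {w : List ℕ} (hk : 1 ≤ k) (hkn : k < n) (h : Word n w) :
    Word n (k :: w) := by
  intro l hl
  rcases List.mem_cons.1 hl with rfl | hl
  · exact ⟨hk, hkn⟩
  · exact h l hl

theorem Word.nil {n : ℕ} : Word n [] := by intro k hk; simp at hk

theorem Word.of_cons {n k : ℕ} {w : List ℕ} (h : Word n (k :: w)) : (1 ≤ k ∧ k < n) ∧ Word n w :=
  ⟨h k (by simp), fun l hl => h l (by simp [hl])⟩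

theorem Std.act {n : ℕ} {f : ℕ → ℕ × ℕ} (h : Std n f) {w : List ℕ} (hw : Word n w) :
    Std n (act w f) := by
  induction w with
  | nil => exact h
  | cons k w ih => exact (ih hw.of_cons.2).bk hw.of_cons.1.1 hw.of_cons.1.2

theorem act_eqv {n : ℕ} {f g : ℕ → ℕ × ℕ} (h : Eqv n f g) {w : List ℕ} (hw : Word n w) :
    Eqv n (act w f) (act w g) := by
  induction w with
  | nil => exact h
  | cons k w ih => exact bk_eqv hw.of_cons.1.1 hw.of_cons.1.2 (ih hw.of_cons.2)

theorem act_of_gt {m x : ℕ} (f : ℕ → ℕ × ℕ) {w : List ℕ} (hw : Word m w) (hx : m < x) :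
    act w f x = f x := by
  induction w with
  | nil => rfl
  | cons k w ih =>
    have := hw.of_cons.1
    rw [act, bk_of_gt _ (by omega), ih hw.of_cons.2]

theorem eqv_of_act {n : ℕ} {f g : ℕ → ℕ × ℕ} (hf : Std n f) (hg : Std n g) {w : List ℕ}
    (hw : Word n w) (h : Eqv n (act w f) (act w g)) : Eqv n f g := by
  induction w with
  | nil => exact h
  | cons k w ih =>
    obtain ⟨⟨h1, h2⟩, h3⟩ := hw.of_cons
    have := bk_eqv h1 h2 h
    rw [act, act, bk_bk (hf.act h3) h1 h2, bk_bk (hg.act h3) h1 h2] at this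
    exact ih h3 this

theorem tEqv_act_iff {n : ℕ} {f g : ℕ → ℕ × ℕ} (hf : Std n f) (hg : Std n g) {w : List ℕ}
    (hw : Word n w) : TEqv n (act w f) (act w g) ↔ TEqv n f g := by
  constructor
  · rintro (h | h)
    · exact Or.inl (eqv_of_act hf hg hw h)
    · rw [← act_tr] at h
      exact Or.inr (eqv_of_act hf hg.tr hw h)
  · rintro (h | h)
    · exact Or.inl (act_eqv h hw)
    · right; rw [← act_tr]; exact act_eqv h hw

theorem cells_bk {n k : ℕ} (f : ℕ → ℕ × ℕ) (hk : 1 ≤ k) (hkn : k < n) :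
    cells (bk k f) n = cells f n := by
  unfold bk
  split_ifs
  · rfl
  ext x
  simp only [mem_cells]
  constructor
  · rintro ⟨l, h1, h2, h3⟩
    have := swapVal_mem hk hkn h1 h2
    exact ⟨_, this.1, this.2, h3⟩
  · rintro ⟨l, h1, h2, h3⟩
    have := swapVal_mem hk hkn h1 h2
    exact ⟨_, this.1, this.2, by rw [swapVal_invol k l, h3]⟩

theorem cells_act {n : ℕ} (f : ℕ → ℕ × ℕ) {w : List ℕ} (hw : Word n w) :
    cells (act w f) n = cells f n := by
  induction w with
  | nil => rfl
  | cons k w ih => rw [act, cells_bk _ hw.of_cons.1.1 hw.of_cons.1.2, ih hw.of_cons.2]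

theorem Std.low {n : ℕ} {f : ℕ → ℕ × ℕ} (h : Std n f) : Low (cells f n) := by
  intro i j
  simp only [mem_cells]
  constructor
  · rintro ⟨l, h1, h2, h3⟩
    obtain ⟨x, h4, h5, h6⟩ := h.2.1 l i j h1 h2 h3
    exact ⟨x, h4, by omega, h6⟩
  · rintro ⟨l, h1, h2, h3⟩
    obtain ⟨x, h4, h5, h6⟩ := h.2.2 l i j h1 h2 h3
    exact ⟨x, h4, by omega, h6⟩

theorem Std.card {n : ℕ} {f : ℕ → ℕ × ℕ} (h : Std n f) : (cells f n).card = n := by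
  unfold cells
  rw [Finset.card_image_of_injOn]
  · simp
  · intro k hk l hl he
    simp only [Finset.coe_Icc, Set.mem_Icc] at hk hl
    exact h.1 k l hk.1 hk.2 hl.1 hl.2 he

theorem Std.addable {m : ℕ} {f : ℕ → ℕ × ℕ} (h : Std (m + 1) f) :
    Addable (cells f m) (f (m + 1)) := by
  refine ⟨?_, ?_, ?_⟩
  · rw [mem_cells]
    rintro ⟨l, h1, h2, h3⟩
    have := h.1 l (m + 1) h1 (by omega) (by omega) le_rfl h3
    omega
  · intro i hi
    obtain ⟨l, h1, h2, h3⟩ := h.2.1 (m + 1) i (f (m + 1)).2 (by omega) le_rfl (by rw [← hi])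
    exact mem_cells.2 ⟨l, h1, by omega, h3⟩
  · intro j hj
    obtain ⟨l, h1, h2, h3⟩ := h.2.2 (m + 1) (f (m + 1)).1 j (by omega) le_rfl (by rw [← hj])
    exact mem_cells.2 ⟨l, h1, by omega, h3⟩

/-- The largest entry can be moved to any corner: by induction, the second largest entry is
moved there first, and then the two are exchanged, two corners not being adjacent. -/
theorem exists_move {m : ℕ} {f : ℕ → ℕ × ℕ} {e : ℕ × ℕ} (he : Corner (cells f m) e) :
    ∃ w, Word m w ∧ act w f m = e := by
  induction m with
  | zero => exact absurd he.1 (by simp [cells])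
  | succ m ih =>
    by_cases hf : f (m + 1) = e
    · exact ⟨[], Word.nil, hf⟩
    have hs := cells_succ f m
    have he' : Corner (cells f m) e := by
      obtain ⟨h1, h2, h3⟩ := he
      rw [hs, Finset.mem_insert] at h1 h2 h3
      push Not at h2 h3
      exact ⟨h1.resolve_left (Ne.symm hf), h2.2, h3.2⟩
    obtain ⟨w, hw, hwe⟩ := ih he'
    have hm : 1 ≤ m := by
      obtain ⟨l, h1, h2, _⟩ := mem_cells.1 he'.1
      omega
    have hmem : f (m + 1) ∈ cells f (m + 1) := by rw [hs]; simp
    refine ⟨m :: w, Word.cons hm (by omega) (hw.mono (by omega)), ?_⟩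
    rw [act, bk_succ, if_neg, hwe]
    rw [hwe, act_of_gt f hw (by omega)]
    rintro (h | h)
    · exact he.2.1 (h ▸ hmem)
    · exact he.2.2 (h ▸ hmem)

/-- A tableau with at least two boxes is not equal to its transpose. -/
theorem not_eqv_and_tr {m : ℕ} {f g : ℕ → ℕ × ℕ} (hf : Std m f) (hm : 2 ≤ m)
    (h : Eqv m f g) (h' : Eqv m f (tr g)) : False := by
  have e2 := h 2 (by omega) hm
  have e2' := h' 2 (by omega) hm
  have one : ∀ l, 1 ≤ l → l < 2 → l = 1 := by omega
  have sym : (f 2).1 = (f 2).2 := by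
    rw [tr, ← e2] at e2'
    exact congrArg Prod.fst e2'
  -- a diagonal cell other than the origin would need two smaller entries
  rcases hc : f 2 with ⟨i, j⟩
  rw [hc] at sym
  simp only at sym
  subst sym
  rcases i with _ | i
  · rcases hc1 : f 1 with ⟨a, b⟩
    rcases a with _ | a
    · rcases b with _ | b
      · have := hf.1 1 2 (by omega) (by omega) (by omega) hm (by rw [hc, hc1])
        omega
      · obtain ⟨l, h1, h2, _⟩ := hf.2.2 1 _ _ le_rfl (by omega) hc1
        omega
    · obtain ⟨l, h1, h2, _⟩ := hf.2.1 1 _ _ le_rfl (by omega) hc1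
      omega
  · obtain ⟨l, h1, h2, h3⟩ := hf.2.1 2 _ _ (by omega) hm hc
    obtain ⟨l', h1', h2', h3'⟩ := hf.2.2 2 _ _ (by omega) hm hc
    rw [one l h1 h2] at h3
    rw [one l' h1' h2', h3] at h3'
    simp at h3'

/-- If two tableaux agree except for the position of the largest entry, then `t_m` separates
their restrictions, unless both largest entries are adjacent to the second largest. -/
theorem not_tEqv_bk {m : ℕ} {f g : ℕ → ℕ × ℕ} (hf : Std (m + 1) f) (hg : Std (m + 1) g)
    (hm : 3 ≤ m) (h : Eqv m f g) (hne : f (m + 1) ≠ g (m + 1))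
    (hadj : ¬ (Adj (f m) (f (m + 1)) ∧ Adj (f m) (g (m + 1)))) :
    ¬ TEqv m (bk m f) (bk m g) := by
  obtain ⟨m, rfl⟩ : ∃ l, m = l + 1 := ⟨m - 1, by omega⟩
  have hlow : Eqv m (bk (m + 1) f) (bk (m + 1) g) :=
    (bk_low m f).trans ((h.mono (by omega)).trans (bk_low m g).symm)
  rintro (h' | h')
  · have := h' (m + 1) (by omega) le_rfl
    have hfg := h (m + 1) (by omega) le_rfl
    rw [bk_self, bk_self, ← hfg] at this
    have hf' := hf.1 (m + 1) (m + 1 + 1) (by omega) (by omega) (by omega) (by omega)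
    have hg' := hg.1 (m + 1) (m + 1 + 1) (by omega) (by omega) (by omega) (by omega)
    rw [← hfg] at hg'
    split_ifs at this with h1 h2 h2
    · exact hadj ⟨h1, h2⟩
    · have := hg' this; omega
    · have := hf' this.symm; omega
    · exact hne this
  · exact not_eqv_and_tr ((hf.bk (by omega) (by omega)).mono (by omega : m ≤ _)) (by omega) hlow
      (h'.mono (by omega))

/-! ### Separating three tableaux -/

/-- The restrictions of three tableaux to the entries `1, …, m` are pairwise neither equal
nor transposes of each other. -/
def Separated (m : ℕ) (f g h : ℕ → ℕ × ℕ) : Prop := ¬ TEqv m f g ∧ ¬ TEqv m f h ∧ ¬ TEqv m g h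

theorem separated_tr_right {m : ℕ} {f g h : ℕ → ℕ × ℕ} :
    Separated m f g (tr h) ↔ Separated m f g h := by
  simp only [Separated, tEqv_tr_right]

theorem separated_tr_mid {m : ℕ} {f g h : ℕ → ℕ × ℕ} :
    Separated m f (tr g) h ↔ Separated m f g h := by
  simp only [Separated, tEqv_tr_right, tEqv_tr_left]

theorem tEqv_bk_low {m : ℕ} {f g : ℕ → ℕ × ℕ} :
    TEqv m (bk (m + 1) f) (bk (m + 1) g) ↔ TEqv m f g := by
  constructor
  · intro h
    exact (bk_low m g).tEqv_left ((bk_low m f).tEqv_left h).symm |>.symm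
  · intro h
    exact (bk_low m g).symm.tEqv_left ((bk_low m f).symm.tEqv_left h).symm |>.symm

/-- Moving the largest entry of `A` and `B` by `t_m` keeps the restrictions of `C` away from those
of `A` and `B` if `A` and `C` already differ among the entries `1, …, m - 1`, which `t_m` does not
move. -/
theorem separated_bk {m : ℕ} {A B C : ℕ → ℕ × ℕ} (hA : Std (m + 1) A) (hB : Std (m + 1) B)
    (hm : 3 ≤ m) (hAB : Eqv m A B) (hne : A (m + 1) ≠ B (m + 1))
    (hadj : ¬ (Adj (A m) (A (m + 1)) ∧ Adj (A m) (B (m + 1))))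
    (hAC : ¬ TEqv (m - 1) A C) : Separated m (bk m A) (bk m B) (bk m C) := by
  refine ⟨not_tEqv_bk hA hB hm hAB hne hadj, fun h => hAC ?_, fun h => hAC ?_⟩ <;>
  obtain ⟨m, rfl⟩ : ∃ l, m = l + 1 := ⟨m - 1, by omega⟩
  · exact tEqv_bk_low.1 (h.mono (by omega))
  · exact (hAB.symm.mono (by omega)).tEqv_left (tEqv_bk_low.1 (h.mono (by omega)))

/-- The case in which all three tableaux agree except for the positions of the largest entry. -/
theorem exists_separated_of_eqv {m : ℕ} {A B C : ℕ → ℕ × ℕ} (hm : 6 ≤ m)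
    (hA : Std (m + 1) A) (hB : Std (m + 1) B) (hC : Std (m + 1) C)
    (hAB : Eqv m A B) (hAC : Eqv m A C) (nAB : A (m + 1) ≠ B (m + 1))
    (nAC : A (m + 1) ≠ C (m + 1)) (nBC : B (m + 1) ≠ C (m + 1)) :
    ∃ w, Word (m + 1) w ∧ Separated m (act w A) (act w B) (act w C) := by
  have aA := hA.addable
  have aB := hB.addable
  have aC := hC.addable
  rw [← hAB.cells] at aB
  rw [← hAC.cells] at aC
  have hA' := hA.mono (by omega : m ≤ m + 1)
  obtain ⟨e, he, h1, h2, h3⟩ := exists_corner_three hA'.low nAB nAC nBC aA aB aC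
    (by rw [hA'.card]; omega)
  obtain ⟨w, hw, hwe⟩ := exists_move he
  have hw' : Word (m + 1) w := hw.mono (by omega)
  have xAB := act_eqv hAB hw
  have xAC := act_eqv hAC hw
  have eA := act_of_gt A hw (by omega : m < m + 1)
  have eB := act_of_gt B hw (by omega : m < m + 1)
  have eC := act_of_gt C hw (by omega : m < m + 1)
  have wB : act w B m = e := by rw [← xAB m (by omega) le_rfl, hwe]
  refine ⟨m :: w, Word.cons (by omega) (by omega) hw', ?_, ?_, ?_⟩
  · exact not_tEqv_bk (hA.act hw') (hB.act hw') (by omega) xAB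
      (by rwa [eA, eB]) (by rwa [hwe, eA, eB])
  · exact not_tEqv_bk (hA.act hw') (hC.act hw') (by omega) xAC
      (by rwa [eA, eC]) (by rwa [hwe, eA, eC])
  · exact not_tEqv_bk (hB.act hw') (hC.act hw') (by omega) (xAB.symm.trans xAC)
      (by rwa [eB, eC]) (by rwa [wB, eB, eC])

/-- The case in which `A` and `B` agree except for the positions `a`, `b` of the largest entry,
`A` and `C` agree up to the third largest entry, and the second largest entry of `A` is
not adjacent to both `a` and `b`. -/
theorem exists_separated_of_eqv_pred {m : ℕ} {A B C : ℕ → ℕ × ℕ} (hm : 5 ≤ m)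
    (hA : Std (m + 1 + 1) A) (hB : Std (m + 1 + 1) B) (hC : Std (m + 1 + 1) C)
    (hAB : Eqv (m + 1) A B) (nAB : A (m + 1 + 1) ≠ B (m + 1 + 1))
    (hadj : ¬ (Adj (A (m + 1)) (A (m + 1 + 1)) ∧ Adj (A (m + 1)) (B (m + 1 + 1))))
    (hAC : Eqv m A C) (nAC : A (m + 1) ≠ C (m + 1)) :
    ∃ w, Word (m + 1 + 1) w ∧ Separated (m + 1) (act w A) (act w B) (act w C) := by
  have hA1 := hA.mono (by omega : m + 1 ≤ m + 1 + 1)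
  have hC1 := hC.mono (by omega : m + 1 ≤ m + 1 + 1)
  have hA2 := hA1.mono (by omega : m ≤ m + 1)
  have aA := hA.addable
  have aB := hB.addable
  have aA1 := hA1.addable
  have aC1 := hC1.addable
  rw [← hAB.cells, cells_succ] at aB
  rw [cells_succ] at aA
  rw [← hAC.cells] at aC1
  obtain ⟨e, he, h1, h2⟩ := exists_corner_four hA2.low nAB nAC aA1 aC1 aA aB
    (by rw [hA2.card]; omega)
  obtain ⟨w, hw, hwe⟩ := exists_move he
  have hw1 : Word (m + 1) w := hw.mono (by omega)
  have eA := act_of_gt A hw (by omega : m < m + 1)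
  have eC := act_of_gt C hw (by omega : m < m + 1)
  have key : ¬ TEqv m (act (m :: w) A) (act (m :: w) C) :=
    not_tEqv_bk (hA1.act hw1) (hC1.act hw1) (by omega) (act_eqv hAC hw)
      (by rwa [eA, eC]) (by rwa [hwe, eA, eC])
  have hv1 : Word (m + 1) (m :: w) := Word.cons (by omega) (by omega) hw1
  have hv2 : Word (m + 1 + 1) (m :: w) := hv1.mono (by omega)
  have vA := act_of_gt A hv1 (by omega : m + 1 < m + 1 + 1)
  have vB := act_of_gt B hv1 (by omega : m + 1 < m + 1 + 1)
  refine ⟨(m + 1) :: m :: w, Word.cons (by omega) (by omega) hv2, ?_⟩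
  refine separated_bk (hA.act hv2) (hB.act hv2) (by omega) (act_eqv hAB hv1) (by rwa [vA, vB]) ?_ key
  rw [vA, vB, act, bk_succ, hwe, eA]
  split_ifs
  · exact hadj
  · exact h2

/-- The case in which only `A` and `B` agree except for the positions of the largest entry. -/
theorem exists_separated_of_eqv_of_not {m : ℕ} {A B C : ℕ → ℕ × ℕ} (hm : 6 ≤ m)
    (hA : Std (m + 1) A) (hB : Std (m + 1) B) (hC : Std (m + 1) C)
    (hAB : Eqv m A B) (nAB : A (m + 1) ≠ B (m + 1)) (nAC : ¬ TEqv m A C) :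
    ∃ w, Word (m + 1) w ∧ Separated m (act w A) (act w B) (act w C) := by
  -- it may be assumed that the entry `m` is not adjacent to both positions of `m + 1`
  have main : ∀ A B C : ℕ → ℕ × ℕ, Std (m + 1) A → Std (m + 1) B → Std (m + 1) C →
      Eqv m A B → A (m + 1) ≠ B (m + 1) → ¬ TEqv m A C →
      ¬ (Adj (A m) (A (m + 1)) ∧ Adj (A m) (B (m + 1))) →
      ∃ w, Word (m + 1) w ∧ Separated m (act w A) (act w B) (act w C) := by
    clear hA hB hC hAB nAB nAC A B C
    intro A B C hA hB hC hAB nAB nAC hadj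
    obtain ⟨m, rfl⟩ : ∃ l, m = l + 1 := ⟨m - 1, by omega⟩
    by_cases hAC : TEqv m A C
    · rcases hAC with hAC | hAC
      · exact exists_separated_of_eqv_pred (by omega) hA hB hC hAB nAB hadj hAC
          (fun h => nAC (Or.inl (hAC.succ h)))
      · obtain ⟨w, hw, h⟩ := exists_separated_of_eqv_pred (by omega) hA hB hC.tr hAB nAB hadj hAC
          (fun h => nAC (Or.inr (hAC.succ h)))
        rw [act_tr, separated_tr_right] at h
        exact ⟨w, hw, h⟩
    · exact ⟨[m + 1], Word.cons (by omega) (by omega) Word.nil,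
        separated_bk hA hB (by omega) hAB nAB hadj hAC⟩
  have hA' := hA.mono (by omega : m ≤ m + 1)
  have hC' := hC.mono (by omega : m ≤ m + 1)
  have aB := hB.addable
  rw [← hAB.cells] at aB
  obtain ⟨e, he, h1⟩ := exists_corner_two nAB hA.addable aB (by rw [hA'.card]; omega)
  obtain ⟨w, hw, hwe⟩ := exists_move he
  have hw' : Word (m + 1) w := hw.mono (by omega)
  have eA := act_of_gt A hw (by omega : m < m + 1)
  have eB := act_of_gt B hw (by omega : m < m + 1)
  obtain ⟨w', h2, h3⟩ := main (act w A) (act w B) (act w C) (hA.act hw') (hB.act hw')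
    (hC.act hw') (act_eqv hAB hw) (by rwa [eA, eB]) (by rwa [tEqv_act_iff hA' hC' hw])
    (by rwa [hwe, eA, eB])
  simp only [← act_append] at h3
  exact ⟨w' ++ w, h2.append hw', h3⟩

theorem exists_separated_of_tEqv {m : ℕ} {A B C : ℕ → ℕ × ℕ} (hm : 6 ≤ m)
    (hA : Std (m + 1) A) (hB : Std (m + 1) B) (hC : Std (m + 1) C)
    (h : Separated (m + 1) A B C) (hAB : TEqv m A B) :
    ∃ w, Word (m + 1) w ∧ Separated m (act w A) (act w B) (act w C) := by
  -- replacing `B` and `C` by their transposes, they may be assumed to agree with `A`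
  have main : ∀ B C : ℕ → ℕ × ℕ, Std (m + 1) B → Std (m + 1) C → Separated (m + 1) A B C →
      Eqv m A B → (TEqv m A C → Eqv m A C) →
      ∃ w, Word (m + 1) w ∧ Separated m (act w A) (act w B) (act w C) := by
    intro B C hB hC h hAB hAC'
    have nAB : A (m + 1) ≠ B (m + 1) := fun e => h.1 (Or.inl (hAB.succ e))
    by_cases hAC : TEqv m A C
    · have hAC := hAC' hAC
      exact exists_separated_of_eqv hm hA hB hC hAB hAC nAB
        (fun e => h.2.1 (Or.inl (hAC.succ e)))
        (fun e => h.2.2 (Or.inl ((hAB.symm.trans hAC).succ e)))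
    · exact exists_separated_of_eqv_of_not hm hA hB hC hAB nAB hAC
  have main2 : ∀ B : ℕ → ℕ × ℕ, Std (m + 1) B → Separated (m + 1) A B C → Eqv m A B →
      ∃ w, Word (m + 1) w ∧ Separated m (act w A) (act w B) (act w C) := by
    intro B hB h hAB
    by_cases hAC : Eqv m A (tr C)
    · obtain ⟨w, hw, h'⟩ := main B (tr C) hB hC.tr (separated_tr_right.2 h) hAB (fun _ => hAC)
      rw [act_tr, separated_tr_right] at h'
      exact ⟨w, hw, h'⟩
    · exact main B C hB hC h hAB (fun h' => h'.resolve_right hAC)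
  rcases hAB with hAB | hAB
  · exact main2 B hB h hAB
  · obtain ⟨w, hw, h'⟩ := main2 (tr B) hB.tr (separated_tr_mid.2 h) hAB
    rw [act_tr, separated_tr_mid] at h'
    exact ⟨w, hw, h'⟩

/-- The combinatorial core: three pairwise inequivalent tableaux with at least seven boxes can
be moved simultaneously so that they stay inequivalent when the largest entry is removed. -/
theorem exists_separated {m : ℕ} {A B C : ℕ → ℕ × ℕ} (hm : 6 ≤ m)
    (hA : Std (m + 1) A) (hB : Std (m + 1) B) (hC : Std (m + 1) C)
    (h : Separated (m + 1) A B C) :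
    ∃ w, Word (m + 1) w ∧ Separated m (act w A) (act w B) (act w C) := by
  by_cases hAB : TEqv m A B
  · exact exists_separated_of_tEqv hm hA hB hC h hAB
  by_cases hAC : TEqv m A C
  · obtain ⟨w, hw, h1, h2, h3⟩ := exists_separated_of_tEqv hm hA hC hB
      ⟨h.2.1, h.1, fun x => h.2.2 x.symm⟩ hAC
    exact ⟨w, hw, h2, h1, fun x => h3 x.symm⟩
  by_cases hBC : TEqv m B C
  · obtain ⟨w, hw, h1, h2, h3⟩ := exists_separated_of_tEqv hm hB hC hA
      ⟨h.2.2, fun x => h.1 x.symm, fun x => h.2.1 x.symm⟩ hBC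
    exact ⟨w, hw, fun x => h2 x.symm, fun x => h3 x.symm, h1⟩
  exact ⟨[], Word.nil, hAB, hAC, hBC⟩

/-! ### From tableaux to sequences of cells -/

/-- The sequence `f` lists the cells of the tableau `T` in the order of their entries. -/
def Pos {μ : YoungDiagram} (T : SYT μ) (f : ℕ → ℕ × ℕ) : Prop :=
  ∀ k, 1 ≤ k → k ≤ μ.card → f k ∈ μ ∧ T.entry (f k).1 (f k).2 = k

section bridge

variable {μ : YoungDiagram}

theorem entry_mem (T : SYT μ) {i j : ℕ} (h : (i, j) ∈ μ) :
    1 ≤ T.entry i j ∧ T.entry i j ≤ μ.card := by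
  have : T.entry i j ∈ μ.cells.image (fun c => T.entry c.1 c.2) :=
    Finset.mem_image.2 ⟨(i, j), h, rfl⟩
  rwa [T.image_eq, Finset.mem_Icc] at this

theorem mem_of_entry (T : SYT μ) {i j : ℕ} (h : 1 ≤ T.entry i j) : (i, j) ∈ μ := by
  by_contra h'
  have := T.zero_outside i j h'
  omega

theorem entry_inj (T : SYT μ) {x y : ℕ × ℕ} (hx : x ∈ μ) (hy : y ∈ μ)
    (h : T.entry x.1 x.2 = T.entry y.1 y.2) : x = y := by
  have : Set.InjOn (fun c : ℕ × ℕ => T.entry c.1 c.2) μ.cells := by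
    rw [← Finset.card_image_iff, T.image_eq]
    simp
  exact this hx hy h

theorem exists_pos (T : SYT μ) : ∃ f, Pos T f := by
  have : ∀ k, ∃ c : ℕ × ℕ, 1 ≤ k → k ≤ μ.card → c ∈ μ ∧ T.entry c.1 c.2 = k := by
    intro k
    by_cases hk : 1 ≤ k ∧ k ≤ μ.card
    · have h : k ∈ μ.cells.image (fun c => T.entry c.1 c.2) := by
        rw [T.image_eq]; exact Finset.mem_Icc.2 hk
      obtain ⟨c, hc, he⟩ := Finset.mem_image.1 h
      exact ⟨c, fun _ _ => ⟨hc, he⟩⟩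
    · exact ⟨(0, 0), fun h1 h2 => absurd ⟨h1, h2⟩ hk⟩
  choose f hf using this
  exact ⟨f, hf⟩

theorem Pos.eq_iff {T : SYT μ} {f : ℕ → ℕ × ℕ} (h : Pos T f) {k i j : ℕ} (h1 : 1 ≤ k)
    (h2 : k ≤ μ.card) : f k = (i, j) ↔ T.entry i j = k := by
  constructor
  · intro he
    have := (h k h1 h2).2
    rwa [he] at this
  · intro he
    exact entry_inj T (h k h1 h2).1 (mem_of_entry T (by omega)) ((h k h1 h2).2.trans he.symm)

theorem Pos.std {T : SYT μ} {f : ℕ → ℕ × ℕ} (h : Pos T f) : Std μ.card f := by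
  refine ⟨?_, ?_, ?_⟩
  · intro k l h1 h2 h3 h4 he
    rw [← (h k h1 h2).2, ← (h l h3 h4).2, he]
  · intro k i j h1 h2 he
    have hm : (i + 1, j) ∈ μ := he ▸ (h k h1 h2).1
    have hlt := T.col_strict i (i + 1) j (by omega) hm
    have hm' : (i, j) ∈ μ := μ.up_left_mem (by omega) le_rfl hm
    have := entry_mem T hm'
    rw [(h.eq_iff h1 h2).1 he] at hlt
    exact ⟨_, this.1, hlt, (h.eq_iff this.1 this.2).2 rfl⟩
  · intro k i j h1 h2 he
    have hm : (i, j + 1) ∈ μ := he ▸ (h k h1 h2).1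
    have hlt := T.row_strict i j (j + 1) (by omega) hm
    have hm' : (i, j) ∈ μ := μ.up_left_mem le_rfl (by omega) hm
    have := entry_mem T hm'
    rw [(h.eq_iff h1 h2).1 he] at hlt
    exact ⟨_, this.1, hlt, (h.eq_iff this.1 this.2).2 rfl⟩

/-- Entries `k` and `k + 1` in non-adjacent boxes can be interchanged. -/
theorem exists_swapped {T : SYT μ} {f : ℕ → ℕ × ℕ} (h : Pos T f) {k : ℕ} (hk : 1 ≤ k)
    (hk' : k < μ.card) (hadj : ¬ Adj (f k) (f (k + 1))) :
    ∃ T' : SYT μ, T'.entry = fun i j => swapVal k (T.entry i j) := by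
  refine ⟨⟨fun i j => swapVal k (T.entry i j), ?_, ?_, ?_, ?_⟩, rfl⟩
  · intro i j hij
    rw [T.zero_outside i j hij]
    exact swapVal_of_ne (by omega) (by omega)
  · intro i j1 j2 hj hm
    refine swapVal_lt (T.row_strict i j1 j2 hj hm) ?_
    rintro ⟨e1, e2⟩
    have f1 := (h.eq_iff hk hk'.le).2 e1
    have f2 := (h.eq_iff (by omega) hk').2 e2
    -- the entries in between are strictly between `k` and `k + 1`, so `j2 = j1 + 1`
    have h1 := T.row_strict i j1 (j1 + 1) (by omega) (μ.up_left_mem le_rfl hj hm)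
    have h2 : j2 = j1 + 1 := by
      by_contra hne
      have := T.row_strict i (j1 + 1) j2 (by omega) hm
      omega
    apply hadj
    rw [f1, f2, h2]
    exact Or.inr rfl
  · intro i1 i2 j hi hm
    refine swapVal_lt (T.col_strict i1 i2 j hi hm) ?_
    rintro ⟨e1, e2⟩
    have f1 := (h.eq_iff hk hk'.le).2 e1
    have f2 := (h.eq_iff (by omega) hk').2 e2
    have h1 := T.col_strict i1 (i1 + 1) j (by omega) (μ.up_left_mem hi le_rfl hm)
    have h2 : i2 = i1 + 1 := by
      by_contra hne
      have := T.col_strict (i1 + 1) i2 j (by omega) hm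
      omega
    apply hadj
    rw [f1, f2, h2]
    exact Or.inl rfl
  · have : μ.cells.image (fun c => swapVal k (T.entry c.1 c.2)) =
        (μ.cells.image (fun c => T.entry c.1 c.2)).image (swapVal k) := by
      rw [Finset.image_image]; rfl
    rw [this, T.image_eq]
    ext x
    simp only [Finset.mem_image, Finset.mem_Icc]
    constructor
    · rintro ⟨y, hy, rfl⟩
      exact swapVal_mem hk hk' hy.1 hy.2
    · intro hx
      exact ⟨_, swapVal_mem hk hk' hx.1 hx.2, swapVal_invol k x⟩

/-- On cell sequences, the Bender–Knuth involution of tableaux is given by `bk`. -/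
theorem Pos.bk {T : SYT μ} {f : ℕ → ℕ × ℕ} (h : Pos T f) {k : ℕ} (hk : 1 ≤ k)
    (hk' : k < μ.card) : Pos (BK μ k T) (bk k f) := by
  change Pos (bkFun μ k T) (_root_.bk k f)
  by_cases hadj : Adj (f k) (f (k + 1))
  · rw [bk_pos hadj, bkFun_neg]
    · exact h
    rintro ⟨T', hT'⟩
    have e1 := h k hk hk'.le
    have e2 := h (k + 1) (by omega) hk'
    have s1 : T'.entry (f k).1 (f k).2 = k + 1 := by
      rw [hT']
      simp only [e1.2, swapVal_left]
    have s2 : T'.entry (f (k + 1)).1 (f (k + 1)).2 = k := by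
      rw [hT']
      simp only [e2.2, swapVal_right]
    rcases hadj with ha | ha <;> rw [ha] at s2 e2
    · have := T'.col_strict _ _ _ (Nat.lt_succ_self _) e2.1
      simp only [Nat.succ_eq_add_one] at this s2
      omega
    · have := T'.row_strict _ _ _ (Nat.lt_succ_self _) e2.1
      simp only [Nat.succ_eq_add_one] at this s2
      omega
  · rw [bk_neg hadj]
    intro x h1 h2
    have hx := swapVal_mem hk hk' h1 h2
    have := h _ hx.1 hx.2
    refine ⟨this.1, ?_⟩
    rw [bkFun_pos (exists_swapped h hk hk' hadj)]
    simp only [this.2]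
    exact swapVal_invol k x

end bridge

/-- Words in the Bender–Knuth involutions act on triples of tableaux through the cactus group. -/
theorem exists_group_elt {n : ℕ} {μ1 μ2 μ3 : YoungDiagram} (h1 : μ1.card = n)
    (h2 : μ2.card = n) (h3 : μ3.card = n) {A : SYT μ1} {B : SYT μ2} {C : SYT μ3}
    {a b c : ℕ → ℕ × ℕ} (hA : Pos A a) (hB : Pos B b) (hC : Pos C c) {w : List ℕ}
    (hw : Word n w) :
    ∃ g ∈ BKtripleGroup μ1 μ2 μ3, Pos (g (A, B, C)).1 (act w a) ∧
      Pos (g (A, B, C)).2.1 (act w b) ∧ Pos (g (A, B, C)).2.2 (act w c) := by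
  induction w with
  | nil => exact ⟨1, Subgroup.one_mem _, hA, hB, hC⟩
  | cons k w ih =>
    obtain ⟨⟨hk, hk'⟩, hw'⟩ := hw.of_cons
    obtain ⟨g, hg, p1, p2, p3⟩ := ih hw'
    refine ⟨BKtriple μ1 μ2 μ3 k * g, Subgroup.mul_mem _
      (Subgroup.subset_closure ⟨k, ⟨hk, by omega⟩, rfl⟩) hg, ?_, ?_, ?_⟩
    · exact p1.bk hk (by omega)
    · exact p2.bk hk (by omega)
    · exact p3.bk hk (by omega)

theorem eqTab_iff {μ1 μ2 : YoungDiagram} (hc : μ1.card = μ2.card) {A : SYT μ1} {B : SYT μ2}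
    {a b : ℕ → ℕ × ℕ} (hA : Pos A a) (hB : Pos B b) : EqTab A B ↔ Eqv μ1.card a b := by
  constructor
  · intro h k h1 h2
    refine (hA.eq_iff h1 h2).2 ?_
    rw [show A.entry = B.entry from h]
    exact (hB.eq_iff h1 (by omega)).1 rfl
  · intro h
    funext i j
    by_cases hi : (i, j) ∈ μ1
    · have := entry_mem A hi
      have e := (hA.eq_iff this.1 this.2).2 rfl
      rw [h _ this.1 this.2] at e
      exact ((hB.eq_iff this.1 (by omega)).1 e).symm
    · rw [A.zero_outside i j hi]
      by_contra hne
      have hm := mem_of_entry B (i := i) (j := j) (by omega)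
      have := entry_mem B hm
      have e := (hB.eq_iff this.1 this.2).2 rfl
      rw [← h _ this.1 (by omega)] at e
      exact hi (e ▸ (hA _ this.1 (by omega)).1)

theorem eqTransposeTab_iff {μ1 μ2 : YoungDiagram} (hc : μ1.card = μ2.card) {A : SYT μ1}
    {B : SYT μ2} {a b : ℕ → ℕ × ℕ} (hA : Pos A a) (hB : Pos B b) :
    EqTransposeTab A B ↔ Eqv μ1.card a (tr b) := by
  constructor
  · intro h k h1 h2
    refine (hA.eq_iff h1 h2).2 ?_
    rw [← h]
    exact (hB.eq_iff h1 (by omega)).1 rfl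
  · intro h i j
    by_cases hi : (j, i) ∈ μ1
    · have := entry_mem A hi
      have e := (hA.eq_iff this.1 this.2).2 rfl
      rw [h _ this.1 this.2] at e
      exact ((hB.eq_iff this.1 (by omega)).1 (Prod.swap_injective e))
    · rw [A.zero_outside j i hi]
      by_contra hne
      have hm := mem_of_entry B (i := i) (j := j) (by omega)
      have := entry_mem B hm
      have e := (hB.eq_iff this.1 this.2).2 rfl
      have e' := h _ this.1 (by omega)
      rw [tr, e] at e'
      have hmem := (hA _ this.1 (by omega)).1
      rw [e'] at hmem
      exact hi hmem

theorem tEqv_iff {μ1 μ2 : YoungDiagram} (hc : μ1.card = μ2.card) {A : SYT μ1} {B : SYT μ2}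
    {a b : ℕ → ℕ × ℕ} (hA : Pos A a) (hB : Pos B b) :
    TEqv μ1.card a b ↔ EqTab A B ∨ EqTransposeTab A B := by
  rw [eqTab_iff hc hA hB, eqTransposeTab_iff hc hA hB, TEqv]

/-- Deleting the largest entry truncates the cell sequence. -/
theorem Pos.restrict {μ ν : YoungDiagram} {A : SYT μ} {A' : SYT ν} {a : ℕ → ℕ × ℕ}
    (h : Pos A a) (hr : IsRestriction A A') : Pos A' a := by
  obtain ⟨a', ha'⟩ := exists_pos A'
  intro k h1 h2
  obtain ⟨hm, he⟩ := ha' k h1 h2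
  have e := hr.2.2 _ hm
  have : a k = a' k := (h.eq_iff h1 (by have := hr.2.1; omega)).2 (e ▸ he)
  rw [this]
  exact ⟨hm, he⟩

/-- Removing a box from a non-hook yields a hook only if the non-hook is almost hook-shaped. -/
theorem hook_of_restrict {μ ν : YoungDiagram} {A : SYT μ} {A' : SYT ν}
    (hr : IsRestriction A A') (hν : HookShaped ν) : HookShaped μ ∨ AlmostHookShaped μ := by
  by_cases hμ : (1, 1) ∈ μ
  swap
  · exact Or.inl hμ
  have hcells : insert (1, 1) ν.cells = μ.cells := by
    apply Finset.eq_of_subset_of_card_le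
    · intro x hx
      rcases Finset.mem_insert.1 hx with rfl | hx
      · exact hμ
      · exact hr.1 hx
    · rw [Finset.card_insert_of_notMem hν]
      exact hr.2.1.ge
  have key : ∀ x : ℕ × ℕ, x ∈ μ → x = (1, 1) ∨ x ∈ ν := by
    intro x hx
    rw [← YoungDiagram.mem_cells, ← hcells, Finset.mem_insert] at hx
    exact hx
  refine Or.inr ⟨hμ, fun h => ?_, fun h => ?_⟩
  · exact hν (ν.up_left_mem le_rfl (by omega) ((key _ h).resolve_left (by simp)))
  · exact hν (ν.up_left_mem (by omega) le_rfl ((key _ h).resolve_left (by simp)))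

/-- A box with a right or a lower neighbour is not a corner. -/
theorem IsCornerBox.not_mem {μ : YoungDiagram} {i j : ℕ} (h : IsCornerBox μ (i, j)) :
    (i + 1, j) ∉ μ ∧ (i, j + 1) ∉ μ := by
  obtain ⟨hm, A, hA⟩ := h
  simp only at hA
  constructor
  · intro h'
    have := A.col_strict i (i + 1) j (by omega) h'
    have := entry_mem A h'
    omega
  · intro h'
    have := A.row_strict i j (j + 1) (by omega) h'
    have := entry_mem A h'
    omega

/-- A partition with two corners that is neither a hook nor almost a hook contains a two by
three or three by two rectangle, which has only one corner, and hence at least one more box. -/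
theorem seven_le_card {μ : YoungDiagram} (hc : HasTwoCorners μ) (h1 : ¬ HookShaped μ)
    (h2 : ¬ AlmostHookShaped μ) : 7 ≤ μ.card := by
  obtain ⟨x, y, hxy, hx, hy⟩ := hc
  have hx' := hx.not_mem
  have hy' := hy.not_mem
  -- a corner outside the rectangle with corner `(p, q)` contributes a seventh box
  have main : ∀ p q : ℕ, (p + 1) * (q + 1) = 6 → (p, q) ∈ μ → 7 ≤ μ.card := by
    intro p q hpq hm
    have sub : Finset.range (p + 1) ×ˢ Finset.range (q + 1) ⊆ μ.cells := by
      rintro ⟨i, j⟩ hij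
      simp only [Finset.mem_product, Finset.mem_range] at hij
      exact μ.up_left_mem (by omega) (by omega) hm
    have corner : ∀ z : ℕ × ℕ, IsCornerBox μ z →
        z ∈ Finset.range (p + 1) ×ˢ Finset.range (q + 1) → z = (p, q) := by
      rintro ⟨i, j⟩ hz hij
      simp only [Finset.mem_product, Finset.mem_range] at hij
      have hi : i = p := by
        by_contra hne
        exact hz.not_mem.1 (μ.up_left_mem (by omega) (by omega) hm)
      have hj : j = q := by
        by_contra hne
        exact hz.not_mem.2 (μ.up_left_mem (by omega) (by omega) hm)
      rw [hi, hj]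
    obtain ⟨z, hz, hz'⟩ : ∃ z, z ∈ μ ∧ z ∉ Finset.range (p + 1) ×ˢ Finset.range (q + 1) := by
      by_contra! hcon
      exact hxy ((corner x hx (hcon x hx.1)).trans (corner y hy (hcon y hy.1)).symm)
    have := Finset.card_le_card (Finset.insert_subset hz sub)
    rw [Finset.card_insert_of_notMem hz', Finset.card_product, Finset.card_range,
      Finset.card_range, hpq] at this
    exact this
  simp only [HookShaped, not_not] at h1
  by_cases h3 : (1, 2) ∈ μ
  · exact main 1 2 rfl h3
  · by_cases h4 : (2, 1) ∈ μ
    · exact main 2 1 rfl h4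
    · exact absurd ⟨h1, h3, h4⟩ h2

/-- Viability of the shapes survives the removal of a box from each of them: a hook can only
arise from a hook or an almost hook, and the triple is not base case. -/
theorem ViableTripleShape.of_restrict {μ1 μ2 μ3 ν1 ν2 ν3 : YoungDiagram}
    (hv : ViableTripleShape μ1 μ2 μ3) (hnb : ¬ BaseCaseTriple μ1 μ2 μ3)
    (o1 : HookShaped ν1 → HookShaped μ1 ∨ AlmostHookShaped μ1)
    (o2 : HookShaped ν2 → HookShaped μ2 ∨ AlmostHookShaped μ2)
    (o3 : HookShaped ν3 → HookShaped μ3 ∨ AlmostHookShaped μ3) :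
    ViableTripleShape ν1 ν2 ν3 := by
  have hnb' := fun h => hnb ⟨hv, h⟩
  obtain ⟨v1, v2, v3⟩ := hv
  refine ⟨fun ⟨x, y⟩ => ?_, fun ⟨x, y⟩ => ?_, fun ⟨x, y⟩ => ?_⟩
  · rcases o1 x with x | x <;> rcases o2 y with y | y <;> simp_all
  · rcases o1 x with x | x <;> rcases o3 y with y | y <;> simp_all
  · rcases o2 x with x | x <;> rcases o3 y with y | y <;> simp_all

/-- Of two members of a viable triple that is not base case, one is neither a hook nor an almost
hook. -/
theorem ViableTripleShape.second {μ1 μ2 μ3 : YoungDiagram}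
    (hv : ViableTripleShape μ1 μ2 μ3) (hnb : ¬ BaseCaseTriple μ1 μ2 μ3)
    (h : HookShaped μ1 ∨ AlmostHookShaped μ1) : ¬ HookShaped μ2 ∧ ¬ AlmostHookShaped μ2 := by
  have hnb' := fun h => hnb ⟨hv, h⟩
  obtain ⟨v1, v2, v3⟩ := hv
  rcases h with h | h <;> refine ⟨fun x => ?_, fun x => ?_⟩ <;> simp_all

/-- Theorem. Let `(μ1, μ2, μ3)` be a viable triple of partitions of `n`, each having
at least two corners, which is not base case, and let `(A, B, C)` be a viable triple
of tableaux. Then there is `g ∈ C_n` (acting diagonally) such that the triple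
`(g(A) ∖ n, g(B) ∖ n, g(C) ∖ n)` is also viable. -/
theorem pre_move_three_transitivity (n : ℕ) (μ1 μ2 μ3 : YoungDiagram)
    (h1 : μ1.card = n) (h2 : μ2.card = n) (h3 : μ3.card = n)
    (hc1 : HasTwoCorners μ1) (hc2 : HasTwoCorners μ2) (hc3 : HasTwoCorners μ3)
    (hv : ViableTripleShape μ1 μ2 μ3) (hnb : ¬ BaseCaseTriple μ1 μ2 μ3)
    (A : SYT μ1) (B : SYT μ2) (C : SYT μ3) (hABC : ViableTabTriple A B C) :
    ∃ g ∈ BKtripleGroup μ1 μ2 μ3,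
      ∀ (ν1 ν2 ν3 : YoungDiagram) (A' : SYT ν1) (B' : SYT ν2) (C' : SYT ν3),
        IsRestriction (g (A, B, C)).1 A' → IsRestriction (g (A, B, C)).2.1 B' →
          IsRestriction (g (A, B, C)).2.2 C' → ViableTabTriple A' B' C' := by
  have hn : 7 ≤ n := by
    by_cases h : HookShaped μ1 ∨ AlmostHookShaped μ1
    · have h' := hv.second hnb h
      exact h2 ▸ seven_le_card hc2 h'.1 h'.2
    · push Not at h
      exact h1 ▸ seven_le_card hc1 h.1 h.2
  obtain ⟨m, rfl⟩ : ∃ m, n = m + 1 := ⟨n - 1, by omega⟩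
  obtain ⟨a, ha⟩ := exists_pos A
  obtain ⟨b, hb⟩ := exists_pos B
  obtain ⟨c, hc⟩ := exists_pos C
  obtain ⟨-, ⟨e1, e2, e3⟩, t1, t2, t3⟩ := hABC
  have hsep : Separated (m + 1) a b c := by
    refine ⟨?_, ?_, ?_⟩
    · have := tEqv_iff (h1.trans h2.symm) ha hb
      rw [h1] at this
      exact fun h => (this.1 h).elim e1 t1
    · have := tEqv_iff (h1.trans h3.symm) ha hc
      rw [h1] at this
      exact fun h => (this.1 h).elim e2 t2
    · have := tEqv_iff (h2.trans h3.symm) hb hc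
      rw [h2] at this
      exact fun h => (this.1 h).elim e3 t3
  obtain ⟨w, hw, s1, s2, s3⟩ := exists_separated (by omega) (h1 ▸ ha.std) (h2 ▸ hb.std)
    (h3 ▸ hc.std) hsep
  obtain ⟨g, hg, p1, p2, p3⟩ := exists_group_elt h1 h2 h3 ha hb hc hw
  refine ⟨g, hg, fun ν1 ν2 ν3 A' B' C' r1 r2 r3 => ?_⟩
  have c1 : ν1.card = m := by have := r1.2.1; omega
  have c2 : ν2.card = m := by have := r2.2.1; omega
  have c3 : ν3.card = m := by have := r3.2.1; omega
  have q1 := p1.restrict r1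
  have q2 := p2.restrict r2
  have q3 := p3.restrict r3
  have k1 := tEqv_iff (c1.trans c2.symm) q1 q2
  have k2 := tEqv_iff (c1.trans c3.symm) q1 q3
  have k3 := tEqv_iff (c2.trans c3.symm) q2 q3
  rw [c1] at k1 k2
  rw [c2] at k3
  exact ⟨hv.of_restrict hnb (hook_of_restrict r1) (hook_of_restrict r2) (hook_of_restrict r3),
    ⟨fun h => s1 (k1.2 (Or.inl h)), fun h => s2 (k2.2 (Or.inl h)), fun h => s3 (k3.2 (Or.inl h))⟩,
    fun h => s1 (k1.2 (Or.inr h)), fun h => s2 (k2.2 (Or.inr h)), fun h => s3 (k3.2 (Or.inr h))⟩
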